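/- For all J₁, J₂ ∈ Φ_θ, the cones satisfy σ⁻_{J₁} ∩ σ⁻_{J₂} = σ⁻_{J₁ ∩ J₂} in V⁻. -/

import Mathlib

/-- The quiver is connected: any two vertices are related by the equivalence
relation generated by "there is an arrow between them". -/
def QuiverConnected {Q₀ Q₁ : Type} (src tgt : Q₁ → Q₀) : Prop :=
  ∀ i j : Q₀, Relation.EqvGen (fun i j => ∃ α : Q₁, src α = i ∧ tgt α = j) i j

/-- The indicator vector of a finite subset of the vertices. -/
def indVec {Q₀ : Type} [DecidableEq Q₀] (I' : Finset Q₀) : Q₀ → ℤ :=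
  fun i => if i ∈ I' then 1 else 0

/-- A subset `J ⊆ Q₁` is `θ`-stable if `θ(𝟙_{I'}) > 0` for every nonempty proper
`I' ∈ S(J)`, where `S(J)` consists of the subsets `I' ⊆ Q₀` such that every arrow
`α ∈ J` with source in `I'` has target in `I'`. -/
def StableArrowSet {Q₀ Q₁ : Type} [Fintype Q₀] [DecidableEq Q₀] (src tgt : Q₁ → Q₀)
    (θ : (Q₀ → ℤ) →ₗ[ℤ] ℤ) (J : Finset Q₁) : Prop :=
  ∀ I' : Finset Q₀, (∀ α ∈ J, src α ∈ I' → tgt α ∈ I') →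
    I'.Nonempty → I' ≠ Finset.univ → 0 < θ (indVec I')

/-- `Φ_θ = {J ⊆ Q₁ : Q₁ ∖ J is θ-stable}`. -/
def PhiTheta {Q₀ Q₁ : Type} [Fintype Q₀] [DecidableEq Q₀] [Fintype Q₁] [DecidableEq Q₁]
    (src tgt : Q₁ → Q₀) (θ : (Q₀ → ℤ) →ₗ[ℤ] ℤ) : Set (Finset Q₁) :=
  {J | StableArrowSet src tgt θ Jᶜ}

/-- The linear map `r_* : ℝ^{Q₀} → ℝ^{Q₁}`, `(r_*λ)_α = λ_{tgt α} − λ_{src α}`. -/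
def rMap {Q₀ Q₁ : Type} (src tgt : Q₁ → Q₀) : (Q₀ → ℝ) →ₗ[ℝ] (Q₁ → ℝ) where
  toFun lam := fun α => lam (tgt α) - lam (src α)
  map_add' := by intro x y; funext α; simp; ring
  map_smul' := by intro c x; funext α; simp; ring

/-- `V⁻ = ℝ^{Q₁}/r_*(ℝ^{Q₀})`. -/
abbrev Vminus {Q₀ Q₁ : Type} (src tgt : Q₁ → Q₀) : Type :=
  (Q₁ → ℝ) ⧸ LinearMap.range (rMap src tgt)

/-- The quotient map `s_* : ℝ^{Q₁} → V⁻`. -/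
noncomputable def sMap {Q₀ Q₁ : Type} (src tgt : Q₁ → Q₀) :
    (Q₁ → ℝ) →ₗ[ℝ] Vminus src tgt :=
  (LinearMap.range (rMap src tgt)).mkQ

/-- The standard basis vector `λ_α` of `ℝ^{Q₁}`. -/
noncomputable def lamb {Q₁ : Type} [DecidableEq Q₁] (α : Q₁) : Q₁ → ℝ :=
  Pi.single α 1

/-- The cone `σ⁻_J ⊆ V⁻` spanned by the vectors `s_*λ_α`, `α ∈ J`. -/
noncomputable def coneOf {Q₀ Q₁ : Type} [Fintype Q₁] [DecidableEq Q₁] (src tgt : Q₁ → Q₀)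
    (J : Finset Q₁) : Set (Vminus src tgt) :=
  {x | ∃ a : Q₁ → ℝ, (∀ α, 0 ≤ a α) ∧ x = sMap src tgt (∑ α ∈ J, a α • lamb α)}

/-!
Suppose `s_*v = s_*w` with `v, w ≥ 0` supported on `J₁` and `J₂`, so that `v - w = r_*l` for a
potential `l` on the vertices. Outside `J₁` the potential can only decrease along arrows, and
outside `J₂` it can only increase. Hence every superlevel set of `l` lies in `S(Q₁ ∖ J₂)` and its
complement in `S(Q₁ ∖ J₁)`. If both were nonempty, stability would make `θ` positive on their
indicators, which sum to `𝟙`, contradicting `θ(𝟙) = 0`. So `l` is constant and `v = w` is supported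
on `J₁ ∩ J₂`.
-/

section ArrowClosed

variable {Q₀ Q₁ : Type}

/-- Membership of a vertex set `I` in the family `S(J)`: no arrow of `J` leaves `I`. It is spelled
as in `StableArrowSet`, so that it unfolds to the condition there. -/
def IsArrowClosed (src tgt : Q₁ → Q₀) (J : Finset Q₁) (I : Finset Q₀) : Prop :=
  ∀ α ∈ J, src α ∈ I → tgt α ∈ I

variable [Fintype Q₀] {src tgt : Q₁ → Q₀} {J : Finset Q₁}

theorem isArrowClosed_compl_iff [DecidableEq Q₀] {I : Finset Q₀} :
    IsArrowClosed src tgt J Iᶜ ↔ IsArrowClosed tgt src J I := by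
  simp only [IsArrowClosed, Finset.mem_compl, not_imp_not]

theorem isArrowClosed_superlevel {R : Type*} [Preorder R] [DecidableLE R] {l : Q₀ → R}
    (hl : ∀ α ∈ J, l (src α) ≤ l (tgt α)) (c : R) :
    IsArrowClosed src tgt J {k | c ≤ l k} := by
  intro α hα hsrc
  rw [Finset.mem_filter_univ] at hsrc ⊢
  exact hsrc.trans (hl α hα)

end ArrowClosed

section Stable

variable {Q₀ Q₁ : Type} [Fintype Q₀] [DecidableEq Q₀]

theorem indVec_add_indVec_compl (I : Finset Q₀) : indVec I + indVec Iᶜ = 1 := by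
  funext i
  by_cases hi : i ∈ I <;> simp [indVec, hi]

namespace StableArrowSet

variable {src tgt : Q₁ → Q₀} {θ : (Q₀ → ℤ) →ₗ[ℤ] ℤ} {J K : Finset Q₁}

theorem eq_empty_or_eq_univ (hJ : StableArrowSet src tgt θ J) (hK : StableArrowSet src tgt θ K)
    (hθ : θ 1 = 0) {I : Finset Q₀} (hI : IsArrowClosed src tgt J I)
    (hIc : IsArrowClosed src tgt K Iᶜ) : I = ∅ ∨ I = Finset.univ := by
  by_contra! ⟨hne, hproper⟩
  have hpos : 0 < θ (indVec I) := hJ I hI hne hproper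
  have hpos_compl : 0 < θ (indVec Iᶜ) :=
    hK Iᶜ hIc (Finset.nonempty_iff_ne_empty.2 (mt (Finset.compl_eq_empty_iff I).1 hproper))
      (mt (Finset.compl_eq_univ_iff I).1 hne.ne_empty)
  have hsum : θ (indVec I) + θ (indVec Iᶜ) = 0 := by
    rw [← map_add, indVec_add_indVec_compl, hθ]
  exact (add_pos hpos hpos_compl).ne' hsum

theorem eq_of_monotone_of_antitone {R : Type*} [LinearOrder R] (hJ : StableArrowSet src tgt θ J)
    (hK : StableArrowSet src tgt θ K) (hθ : θ 1 = 0) {l : Q₀ → R}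
    (hmono : ∀ α ∈ J, l (src α) ≤ l (tgt α)) (hanti : ∀ α ∈ K, l (tgt α) ≤ l (src α))
    (i j : Q₀) : l i = l j := by
  suffices hle : ∀ i j, l i ≤ l j from (hle i j).antisymm (hle j i)
  intro i j
  have hi : i ∈ ({k | l i ≤ l k} : Finset Q₀) := by simp
  have huniv : ({k | l i ≤ l k} : Finset Q₀) = Finset.univ :=
    (hJ.eq_empty_or_eq_univ hK hθ (isArrowClosed_superlevel hmono (l i))
      (isArrowClosed_compl_iff.2 (isArrowClosed_superlevel hanti (l i)))).resolve_left
      (Finset.ne_empty_of_mem hi)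
  exact (Finset.mem_filter_univ j).1 (Finset.eq_univ_iff_forall.1 huniv j)

end StableArrowSet

end Stable

section Cone

variable {Q₀ Q₁ : Type}

theorem sMap_eq_sMap_iff {src tgt : Q₁ → Q₀} {v w : Q₁ → ℝ} :
    sMap src tgt v = sMap src tgt w ↔ ∃ l, rMap src tgt l = v - w :=
  Submodule.Quotient.eq _

theorem sum_smul_lamb_apply [DecidableEq Q₁] (J : Finset Q₁) (a : Q₁ → ℝ) (β : Q₁) :
    (∑ α ∈ J, a α • lamb α) β = if β ∈ J then a β else 0 := by
  simp [lamb, Finset.sum_apply, Pi.single_apply]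

variable [Fintype Q₁] [DecidableEq Q₁] {src tgt : Q₁ → Q₀} {J J₁ J₂ : Finset Q₁}

theorem mem_coneOf_iff {x : Vminus src tgt} :
    x ∈ coneOf src tgt J ↔
      ∃ v : Q₁ → ℝ, 0 ≤ v ∧ (∀ α ∉ J, v α = 0) ∧ sMap src tgt v = x := by
  constructor
  · rintro ⟨a, ha, rfl⟩
    refine ⟨_, fun β => ?_, fun β hβ => ?_, rfl⟩
    · rw [sum_smul_lamb_apply]
      exact ite_nonneg (ha β) le_rfl
    · rw [sum_smul_lamb_apply, if_neg hβ]
  · rintro ⟨v, hv, hvJ, rfl⟩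
    refine ⟨v, hv, congrArg _ (funext fun β => ?_)⟩
    rw [sum_smul_lamb_apply, eq_comm, ite_eq_left_iff]
    exact fun hβ => (hvJ β hβ).symm

theorem coneOf_mono (h : J₁ ⊆ J₂) : coneOf src tgt J₁ ⊆ coneOf src tgt J₂ := by
  intro x hx
  obtain ⟨v, hv, hvJ, hvx⟩ := mem_coneOf_iff.1 hx
  exact mem_coneOf_iff.2 ⟨v, hv, fun α hα => hvJ α (Finset.notMem_mono h hα), hvx⟩

theorem coneOf_inter_coneOf_of_rMap_eq_zero
    (h : ∀ l, (∀ α ∉ J₁, rMap src tgt l α ≤ 0) → (∀ α ∉ J₂, 0 ≤ rMap src tgt l α) →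
      rMap src tgt l = 0) :
    coneOf src tgt J₁ ∩ coneOf src tgt J₂ = coneOf src tgt (J₁ ∩ J₂) := by
  refine Set.Subset.antisymm ?_ (Set.subset_inter (coneOf_mono Finset.inter_subset_left)
    (coneOf_mono Finset.inter_subset_right))
  rintro x ⟨hx₁, hx₂⟩
  obtain ⟨v, hv, hvJ₁, hvx⟩ := mem_coneOf_iff.1 hx₁
  obtain ⟨w, hw, hwJ₂, hwx⟩ := mem_coneOf_iff.1 hx₂
  obtain ⟨l, hl⟩ := sMap_eq_sMap_iff.1 (hvx.trans hwx.symm)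
  have hl_zero : rMap src tgt l = 0 := by
    refine h l (fun α hα => ?_) (fun α hα => ?_)
    · simpa [hl, hvJ₁ α hα] using hw α
    · simpa [hl, hwJ₂ α hα] using hv α
  have hvw : v = w := sub_eq_zero.1 (hl.symm.trans hl_zero)
  refine mem_coneOf_iff.2 ⟨v, hv, fun α hα => ?_, hvx⟩
  rcases not_and_or.1 (mt Finset.mem_inter.2 hα) with hα₁ | hα₂
  · exact hvJ₁ α hα₁
  · rw [hvw, hwJ₂ α hα₂]

end Cone

/-- For `J₁, J₂ ∈ Φ_θ` one has `σ⁻_{J₁} ∩ σ⁻_{J₂} = σ⁻_{J₁ ∩ J₂}`. -/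
theorem stmt2 {Q₀ Q₁ : Type} [Fintype Q₀] [DecidableEq Q₀] [Fintype Q₁] [DecidableEq Q₁]
    (src tgt : Q₁ → Q₀) (hconn : QuiverConnected src tgt)
    (θ : (Q₀ → ℤ) →ₗ[ℤ] ℤ) (hθ : θ (fun _ => 1) = 0)
    (J₁ J₂ : Finset Q₁) (h₁ : J₁ ∈ PhiTheta src tgt θ) (h₂ : J₂ ∈ PhiTheta src tgt θ) :
    coneOf src tgt J₁ ∩ coneOf src tgt J₂ = coneOf src tgt (J₁ ∩ J₂) := by
  refine coneOf_inter_coneOf_of_rMap_eq_zero fun l hanti hmono => funext fun α => sub_eq_zero.2 ?_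
  exact StableArrowSet.eq_of_monotone_of_antitone h₂ h₁ hθ
    (fun β hβ => sub_nonneg.1 (hmono β (Finset.mem_compl.1 hβ)))
    (fun β hβ => sub_nonpos.1 (hanti β (Finset.mem_compl.1 hβ))) (tgt α) (src α)
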